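/- Let x ∈ ℝ² have irrational slope ξ with ω(ξ) < ∞, and let y ∈ ℝ² \ {0} have rational slope (or y₂ = 0). Then μ(x,y) = ω(ξ)/(ω(ξ)+1) and μ̂(x,y) = 1/(ω(ξ)+1). -/

import Mathlib

open Matrix MeasureTheory

/-- Denominator `q k` of the `k`-th convergent of the continued fraction of `ξ`. -/
noncomputable def qden (ξ : ℝ) (k : ℕ) : ℝ := (GenContFract.of ξ).dens k

/-- Numerator `p k` of the `k`-th convergent of the continued fraction of `ξ`. -/
noncomputable def pnum (ξ : ℝ) (k : ℕ) : ℝ := (GenContFract.of ξ).nums k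

/-- Action of an integer matrix on `ℝ²` by left multiplication. -/
noncomputable def act (g : Matrix (Fin 2) (Fin 2) ℤ) (x : Fin 2 → ℝ) : Fin 2 → ℝ :=
  (g.map (Int.cast : ℤ → ℝ)).mulVec x

/-- Sup norm of an integer `2 × 2` matrix. -/
noncomputable def mnorm (g : Matrix (Fin 2) (Fin 2) ℤ) : ℝ :=
  max (max |(g 0 0 : ℝ)| |(g 0 1 : ℝ)|) (max |(g 1 0 : ℝ)| |(g 1 1 : ℝ)|)

/-- Sup norm on `ℝ²`. -/
noncomputable def vnorm (v : Fin 2 → ℝ) : ℝ := max |v 0| |v 1|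

/-- The set of exponents `w` such that `|v α + u| ≤ |v| ^ (-w)` has infinitely many
integer solutions `(v, u)`; its supremum is the irrationality measure `ω(α)`. -/
def omegaSet (α : ℝ) : Set ℝ :=
  {w : ℝ | {p : ℤ × ℤ | |(p.1 : ℝ) * α + (p.2 : ℝ)| ≤ |(p.1 : ℝ)| ^ (-w)}.Infinite}

/-- The set of exponents `μ` such that `|γ x - y| ≤ |γ| ^ (-μ)` for infinitely many
`γ ∈ SL(2, ℤ)`; its supremum is `μ(x, y)`. -/
def muSet (x y : Fin 2 → ℝ) : Set ℝ :=
  {μ : ℝ | {γ : Matrix (Fin 2) (Fin 2) ℤ |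
    γ.det = 1 ∧ vnorm (act γ x - y) ≤ mnorm γ ^ (-μ)}.Infinite}

/-- The set of exponents `μ` such that for all sufficiently large `T` there is
`γ ∈ SL(2, ℤ)` with `|γ| ≤ T` and `|γ x - y| ≤ T ^ (-μ)`; its supremum is `μ̂(x, y)`. -/
def muHatSet (x y : Fin 2 → ℝ) : Set ℝ :=
  {μ : ℝ | ∃ T₀ : ℝ, ∀ T : ℝ, T₀ ≤ T → ∃ γ : Matrix (Fin 2) (Fin 2) ℤ,
    γ.det = 1 ∧ mnorm γ ≤ T ∧ vnorm (act γ x - y) ≤ T ^ (-μ)}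

lemma vnorm_nonneg (v : Fin 2 → ℝ) : 0 ≤ vnorm v := le_max_of_le_left (abs_nonneg _)

lemma abs_le_vnorm_zero (v : Fin 2 → ℝ) : |v 0| ≤ vnorm v := le_max_left _ _

lemma abs_le_vnorm_one (v : Fin 2 → ℝ) : |v 1| ≤ vnorm v := le_max_right _ _

lemma abs_le_mnorm (g : Matrix (Fin 2) (Fin 2) ℤ) (i j : Fin 2) : |(g i j : ℝ)| ≤ mnorm g := by
  unfold mnorm
  fin_cases i <;> fin_cases j <;> simp

lemma mnorm_nonneg (g : Matrix (Fin 2) (Fin 2) ℤ) : 0 ≤ mnorm g :=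
  (abs_nonneg _).trans (abs_le_mnorm g 0 0)

lemma act_zero (g : Matrix (Fin 2) (Fin 2) ℤ) (x : Fin 2 → ℝ) :
    act g x 0 = g 0 0 * x 0 + g 0 1 * x 1 := by
  simp [act, Matrix.mulVec, dotProduct]

lemma act_one (g : Matrix (Fin 2) (Fin 2) ℤ) (x : Fin 2 → ℝ) :
    act g x 1 = g 1 0 * x 0 + g 1 1 * x 1 := by
  simp [act, Matrix.mulVec, dotProduct]

lemma finite_mnorm_le (R : ℝ) : {g : Matrix (Fin 2) (Fin 2) ℤ | mnorm g ≤ R}.Finite := by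
  have h : (Set.univ.pi fun _ : Fin 2 => Set.univ.pi fun _ : Fin 2 =>
      Set.Icc (-⌈R⌉) ⌈R⌉ : Set (Fin 2 → Fin 2 → ℤ)).Finite :=
    Set.Finite.pi fun _ => Set.Finite.pi fun _ => Set.finite_Icc _ _
  refine h.subset fun g hg => ?_
  intro i _ j _
  have h1 : |(g i j : ℝ)| ≤ ⌈R⌉ := ((abs_le_mnorm g i j).trans hg).trans (Int.le_ceil R)
  have h2 : |g i j| ≤ ⌈R⌉ := by exact_mod_cast h1
  exact Set.mem_Icc.mpr (abs_le.mp h2)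

lemma exists_lt_mnorm_of_infinite {S : Set (Matrix (Fin 2) (Fin 2) ℤ)} (hS : S.Infinite) (R : ℝ) :
    ∃ g ∈ S, R < mnorm g := by
  by_contra! h
  exact hS ((finite_mnorm_le R).subset h)

lemma infinite_of_forall_exists_lt_mnorm {S : Set (Matrix (Fin 2) (Fin 2) ℤ)}
    (h : ∀ R : ℝ, ∃ g ∈ S, R < mnorm g) : S.Infinite := by
  intro hS
  obtain ⟨B, hB⟩ := (hS.image mnorm).bddAbove
  obtain ⟨g, hg, hlt⟩ := h B
  exact hlt.not_ge (hB ⟨g, hg, rfl⟩)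

/-- An irrational linear form takes no zero value at a nonzero integer. -/
lemma Irrational.abs_int_mul_add_pos {ξ : ℝ} (hξ : Irrational ξ) {c : ℤ} (hc : c ≠ 0) (d : ℤ) :
    0 < |(c : ℝ) * ξ + d| :=
  abs_pos.mpr ((hξ.intCast_mul hc).add_intCast d).ne_zero

lemma one_mem_omegaSet {ξ : ℝ} (hξ : Irrational ξ) : (1 : ℝ) ∈ omegaSet ξ := by
  have h := Real.infinite_rat_abs_sub_lt_one_div_den_sq_of_irrational hξ
  have hinj : Function.Injective fun q : ℚ => ((q.den : ℤ), -q.num) := by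
    intro a b hab
    simp only [Prod.mk.injEq, Nat.cast_inj, neg_inj] at hab
    exact Rat.ext hab.2 hab.1
  refine (h.image hinj.injOn).mono ?_
  rintro _ ⟨q, hq, rfl⟩
  have hd : (0 : ℝ) < q.den := by exact_mod_cast q.pos
  simp only [Set.mem_ofPred_eq] at hq ⊢
  have e : ((q.den : ℤ) : ℝ) * ξ + ((-q.num : ℤ) : ℝ) = q.den * (ξ - q) := by
    have := Rat.cast_def (K := ℝ) q
    rw [this]; push_cast; field_simp; ring
  rw [e, abs_mul, Real.rpow_neg_one]
  push_cast
  rw [abs_of_pos hd]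
  calc (q.den : ℝ) * |ξ - q| ≤ q.den * (1 / q.den ^ 2) := by gcongr
    _ = (q.den : ℝ)⁻¹ := by field_simp

/-- Above the irrationality exponent the linear form is bounded below by a power. -/
lemma exists_pos_le_abs_of_notMem_omegaSet {ξ : ℝ} (hξ : Irrational ξ) {w : ℝ}
    (hw : w ∉ omegaSet ξ) :
    ∃ K > 0, ∀ c d : ℤ, c ≠ 0 → K * |(c : ℝ)| ^ (-w) ≤ |(c : ℝ) * ξ + d| := by
  have hfin : {p : ℤ × ℤ | |(p.1 : ℝ) * ξ + (p.2 : ℝ)| ≤ |(p.1 : ℝ)| ^ (-w)}.Finite :=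
    Set.not_infinite.mp hw
  obtain ⟨B, hB⟩ := (hfin.image fun p : ℤ × ℤ =>
    |(p.1 : ℝ)| ^ (-w) / |(p.1 : ℝ) * ξ + (p.2 : ℝ)|).bddAbove
  have hB1 : 0 < max B 1 := by positivity
  refine ⟨(max B 1)⁻¹, by positivity, fun c d hc => ?_⟩
  have hpos := hξ.abs_int_mul_add_pos hc d
  rw [inv_mul_le_iff₀ hB1]
  rcases le_total |(c : ℝ) * ξ + d| (|(c : ℝ)| ^ (-w)) with h | h
  · have := hB ⟨(c, d), h, rfl⟩
    simp only [div_le_iff₀ hpos] at this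
    exact this.trans (by gcongr; exact le_max_left _ _)
  · exact h.trans (le_mul_of_one_le_left hpos.le (le_max_right _ _))

/-- Solutions of the defining inequality of `omegaSet` have unbounded leading coefficient. -/
lemma exists_lt_abs_of_mem_omegaSet {ξ w : ℝ} (hw : w ∈ omegaSet ξ) (R : ℝ) :
    ∃ v u : ℤ, R < |(v : ℝ)| ∧ |(v : ℝ) * ξ + u| ≤ |(v : ℝ)| ^ (-w) := by
  by_contra! h
  refine hw ?_
  have hf := Set.finite_Icc (-⌈R⌉) ⌈R⌉
  refine Set.Finite.subset (hf.biUnion (t := fun v : ℤ =>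
    {v} ×ˢ Set.Icc ⌈-(v : ℝ) * ξ - |(v : ℝ)| ^ (-w)⌉ ⌊-(v : ℝ) * ξ + |(v : ℝ)| ^ (-w)⌋)
    fun v _ => (Set.finite_singleton v).prod (Set.finite_Icc _ _)) ?_
  rintro ⟨v, u⟩ hvu
  simp only [Set.mem_ofPred_eq] at hvu
  have h1 : |(v : ℝ)| ≤ R := by
    by_contra! h2
    exact (h v u h2).not_ge hvu
  have h2 : |v| ≤ ⌈R⌉ := by exact_mod_cast h1.trans (Int.le_ceil R)
  have h3 := abs_le.mp hvu
  simp only [Set.mem_iUnion, Set.mem_prod, Set.mem_singleton_iff, Set.mem_Icc, exists_prop]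
  exact ⟨v, abs_le.mp h2, rfl, Int.ceil_le.mpr (by linarith), Int.le_floor.mpr (by linarith)⟩

lemma exists_unimodular_of_rational_slope {y : Fin 2 → ℝ} (hy : y ≠ 0)
    (hslope : y 1 = 0 ∨ ∃ r : ℚ, y 0 = (r : ℝ) * y 1) :
    ∃ (p q r s : ℤ) (t : ℝ), p * s - q * r = 1 ∧ t ≠ 0 ∧ y 0 = t * p ∧ y 1 = t * q := by
  by_cases h1 : y 1 = 0
  · refine ⟨1, 0, 0, 1, y 0, by norm_num, fun h0 => hy ?_, by simp, by simp [h1]⟩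
    ext i
    fin_cases i
    · exact h0
    · exact h1
  · obtain ⟨ρ, hρ⟩ := hslope.resolve_left h1
    obtain ⟨a, b, hab⟩ := Int.isCoprime_iff_gcd_eq_one.mpr
      (show Int.gcd ρ.num ρ.den = 1 from ρ.reduced)
    have hd : (ρ.den : ℝ) ≠ 0 := by exact_mod_cast ρ.den_nz
    refine ⟨ρ.num, ρ.den, -b, a, y 1 / ρ.den, by linarith, div_ne_zero h1 hd, ?_, ?_⟩
    · rw [hρ, Rat.cast_def]
      ring
    · push_cast
      field_simp

set_option maxHeartbeats 400000 in
/-- Given `γ` with `γ x` close to `y`, the integer linear form of the slope of `x` takes a small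
value whose size is controlled in terms of the norm of `γ`. -/
lemma exists_form_of_approx {x y : Fin 2 → ℝ} (hx2 : x 1 ≠ 0) (hξ : Irrational (x 0 / x 1))
    {W : ℝ} (hW : 0 ≤ W) (hWmem : W ∉ omegaSet (x 0 / x 1))
    (hy : y ≠ 0) (hslope : y 1 = 0 ∨ ∃ r : ℚ, y 0 = (r : ℝ) * y 1) :
    ∃ C ≥ 1, ∃ δ > 0, ∀ γ : Matrix (Fin 2) (Fin 2) ℤ, γ.det = 1 → vnorm (act γ x - y) ≤ δ →
      ∃ c d : ℤ, c ≠ 0 ∧ |(c : ℝ) * (x 0 / x 1) + d| ≤ C * vnorm (act γ x - y) ∧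
        |(c : ℝ)| ≤ C * mnorm γ * |(c : ℝ) * (x 0 / x 1) + d| := by
  obtain ⟨p, q, r, s, t, hdet, ht, hy0, hy1⟩ := exists_unimodular_of_rational_slope hy hslope
  obtain ⟨K, hK, hlow⟩ := exists_pos_le_abs_of_notMem_omegaSet hξ hWmem
  set ξ := x 0 / x 1 with hξdef
  have hx0 : x 0 = ξ * x 1 := by rw [hξdef]; field_simp
  have hX : 0 < |x 1| := abs_pos.mpr hx2
  have hT : 0 < |t| := abs_pos.mpr ht
  -- bounds for the entries of the unimodular matrix and the distance of `t / x 1` from zero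
  set P : ℝ := |(p : ℝ)| + |(q : ℝ)| + |(r : ℝ)| + |(s : ℝ)| + 1 with hP
  have hP1 : 1 ≤ P := by
    rw [hP]
    linarith [abs_nonneg (p : ℝ), abs_nonneg (q : ℝ), abs_nonneg (r : ℝ), abs_nonneg (s : ℝ)]
  set κ : ℝ := |t| / (2 * |x 1|) with hκ
  have hκ0 : 0 < κ := by positivity
  set M : ℝ := max (2 / κ) 1 with hM
  have hM1 : 1 ≤ M := le_max_right _ _
  have hMκ : 2 ≤ M * κ := by
    have := le_max_left (2 / κ) 1
    rwa [← hM, div_le_iff₀ hκ0] at this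
  set D : ℝ := P / |x 1| with hD
  have hD0 : 0 < D := by positivity
  set C : ℝ := max (max D (2 * P / κ)) 1 with hC
  have hCD : D ≤ C := (le_max_left _ _).trans (le_max_left _ _)
  have hCP : 2 * P / κ ≤ C := (le_max_right _ _).trans (le_max_left _ _)
  have hKM : 0 < K * M ^ (-W) := by positivity
  set δ : ℝ := min (min (|t| / (2 * P)) (1 / (2 * D))) (K * M ^ (-W) / (2 * D)) with hδ
  refine ⟨C, le_max_right _ _, δ, by positivity, fun γ hγ herr => ?_⟩
  set e := vnorm (act γ x - y) with he
  have he0 : |act γ x 0 - y 0| ≤ e := abs_le_vnorm_zero (act γ x - y)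
  have he1 : |act γ x 1 - y 1| ≤ e := abs_le_vnorm_one (act γ x - y)
  rw [act_zero] at he0
  rw [act_one] at he1
  have hen : 0 ≤ e := vnorm_nonneg _
  have hδ1 : e * P ≤ |t| / 2 := by
    have : e ≤ |t| / (2 * P) := herr.trans ((min_le_left _ _).trans (min_le_left _ _))
    rw [le_div_iff₀ (by positivity)] at this
    linarith
  have hδ2 : D * e < 1 := by
    have : e ≤ 1 / (2 * D) := herr.trans ((min_le_left _ _).trans (min_le_right _ _))
    rw [le_div_iff₀ (by positivity)] at this
    linarith
  have hδ3 : D * e < K * M ^ (-W) := by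
    have : e ≤ K * M ^ (-W) / (2 * D) := herr.trans (min_le_right _ _)
    rw [le_div_iff₀ (by positivity)] at this
    linarith
  rw [Matrix.det_fin_two] at hγ
  set a := γ 0 0
  set b := γ 0 1
  set c := γ 1 0
  set d := γ 1 1
  have hdetR : (p * s - q * r : ℝ) = 1 := by exact_mod_cast hdet
  have hγR : (a * d - b * c : ℝ) = 1 := by exact_mod_cast hγ
  set c' : ℤ := -q * a + p * c with hc'
  set d' : ℤ := -q * b + p * d with hd'
  set a' : ℤ := s * a - r * c with ha'
  set b' : ℤ := s * b - r * d with hb'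
  have hdet' : (a' * d' - b' * c' : ℝ) = 1 := by
    rw [ha', hb', hc', hd']
    push_cast
    linear_combination (p * s - q * r : ℝ) * hγR + hdetR
  have hdetZ : a' * d' - b' * c' = 1 := by exact_mod_cast hdet'
  have hform : |(c' : ℝ) * ξ + d'| ≤ D * e := by
    have h1 : x 1 * ((c' : ℝ) * ξ + d') =
        -q * (a * x 0 + b * x 1 - y 0) + p * (c * x 0 + d * x 1 - y 1) := by
      rw [hy0, hy1, hx0, hc', hd']; push_cast; ring
    have h2 : |x 1| * |(c' : ℝ) * ξ + d'| ≤ P * e := by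
      rw [← abs_mul, h1]
      refine (abs_add_le _ _).trans ?_
      rw [abs_mul, abs_mul, abs_neg]
      calc _ ≤ |(q : ℝ)| * e + |(p : ℝ)| * e := by gcongr
        _ = (|(q : ℝ)| + |(p : ℝ)|) * e := by ring
        _ ≤ P * e := by
          gcongr
          rw [hP]; linarith [abs_nonneg (r : ℝ), abs_nonneg (s : ℝ)]
    rw [hD, div_mul_eq_mul_div, le_div_iff₀ hX]
    linarith
  have hc0 : c' ≠ 0 := by
    intro h0
    rw [h0] at hform hdetZ
    have hd0 : d' ≠ 0 := by
      intro h; rw [h] at hdetZ; simp at hdetZ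
    have : (1 : ℝ) ≤ |(d' : ℝ)| := by exact_mod_cast Int.one_le_abs hd0
    simp only [Int.cast_zero, zero_mul, zero_add] at hform
    linarith
  have hcM : M < |(c' : ℝ)| := by
    by_contra! h
    have hcpos : (0 : ℝ) < |(c' : ℝ)| := by positivity
    have h1 := hlow c' d' hc0
    have h2 : M ^ (-W) ≤ |(c' : ℝ)| ^ (-W) := Real.rpow_le_rpow_of_nonpos hcpos h (by linarith)
    have h3 : K * M ^ (-W) ≤ K * |(c' : ℝ)| ^ (-W) := by gcongr
    linarith
  have htop : κ ≤ |(a' : ℝ) * ξ + b'| := by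
    have h1 : x 1 * ((a' : ℝ) * ξ + b') =
        t - (-s * (a * x 0 + b * x 1 - y 0) + r * (c * x 0 + d * x 1 - y 1)) := by
      rw [hy0, hy1, hx0, ha', hb']; push_cast; linear_combination t * hdetR
    have h2 : |t| / 2 ≤ |x 1| * |(a' : ℝ) * ξ + b'| := by
      rw [← abs_mul, h1]
      refine le_trans ?_ (abs_sub_abs_le_abs_sub _ _)
      have h3 : |-s * (a * x 0 + b * x 1 - y 0) + r * (c * x 0 + d * x 1 - y 1)| ≤ P * e := by
        refine (abs_add_le _ _).trans ?_
        rw [abs_mul, abs_mul, abs_neg]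
        calc _ ≤ |(s : ℝ)| * e + |(r : ℝ)| * e := by gcongr
          _ = (|(s : ℝ)| + |(r : ℝ)|) * e := by ring
          _ ≤ P * e := by
            gcongr
            rw [hP]; linarith [abs_nonneg (p : ℝ), abs_nonneg (q : ℝ)]
      linarith
    rw [hκ, div_le_iff₀ (by positivity)]
    linarith
  have haN : |(a' : ℝ)| ≤ P * mnorm γ := by
    have ha1 : |(a : ℝ)| ≤ mnorm γ := abs_le_mnorm γ 0 0
    have hc1 : |(c : ℝ)| ≤ mnorm γ := abs_le_mnorm γ 1 0
    have hN := mnorm_nonneg γ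
    rw [ha']
    push_cast
    refine (abs_sub _ _).trans ?_
    rw [abs_mul, abs_mul]
    calc _ ≤ |(s : ℝ)| * mnorm γ + |(r : ℝ)| * mnorm γ := by gcongr
      _ = (|(s : ℝ)| + |(r : ℝ)|) * mnorm γ := by ring
      _ ≤ P * mnorm γ := by
        gcongr
        rw [hP]; linarith [abs_nonneg (p : ℝ), abs_nonneg (q : ℝ)]
  refine ⟨c', d', hc0, hform.trans (by gcongr), ?_⟩
  set ε := |(c' : ℝ) * ξ + d'| with hε
  have hε0 : 0 ≤ ε := abs_nonneg _
  have h1 : |(c' : ℝ)| * κ ≤ 1 + |(a' : ℝ)| * ε := by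
    have h2 : (c' : ℝ) * (a' * ξ + b') = a' * (c' * ξ + d') - 1 := by
      linear_combination -hdet'
    calc |(c' : ℝ)| * κ ≤ |(c' : ℝ)| * |(a' : ℝ) * ξ + b'| := by gcongr
      _ = |a' * (c' * ξ + d') - 1| := by rw [← abs_mul, h2]
      _ ≤ |a' * (c' * ξ + d')| + |(1 : ℝ)| := abs_sub _ _
      _ = 1 + |(a' : ℝ)| * ε := by rw [abs_mul, abs_one, hε]; ring
  have h2 : 2 ≤ |(c' : ℝ)| * κ := hMκ.trans (by gcongr)
  have h3 : |(c' : ℝ)| * κ ≤ 2 * P * mnorm γ * ε := by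
    have : |(a' : ℝ)| * ε ≤ P * mnorm γ * ε := by gcongr
    linarith
  have hN := mnorm_nonneg γ
  calc |(c' : ℝ)| ≤ 2 * P * mnorm γ * ε / κ := by rwa [le_div_iff₀ hκ0]
    _ = 2 * P / κ * mnorm γ * ε := by ring
    _ ≤ C * mnorm γ * ε := by gcongr

set_option maxHeartbeats 400000 in
/-- A primitive small value of the integer linear form of the slope of `x` produces an element
of `SL(2, ℤ)` sending `x` close to `y`. -/
lemma exists_approx_of_form {x y : Fin 2 → ℝ} (hx2 : x 1 ≠ 0) (hξ : Irrational (x 0 / x 1))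
    (hy : y ≠ 0) (hslope : y 1 = 0 ∨ ∃ r : ℚ, y 0 = (r : ℝ) * y 1) :
    ∃ C ≥ 1, ∀ c d : ℤ, c ≠ 0 → IsCoprime c d → |(c : ℝ) * (x 0 / x 1) + d| ≤ 1 →
      ∃ γ : Matrix (Fin 2) (Fin 2) ℤ, γ.det = 1 ∧
        vnorm (act γ x - y) ≤ C * |(c : ℝ) * (x 0 / x 1) + d| ∧
        mnorm γ ≤ C * (|(c : ℝ)| / |(c : ℝ) * (x 0 / x 1) + d|) := by
  obtain ⟨p, q, r, s, t, hdet, ht, hy0, hy1⟩ := exists_unimodular_of_rational_slope hy hslope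
  set ξ := x 0 / x 1 with hξdef
  have hx0 : x 0 = ξ * x 1 := by rw [hξdef]; field_simp
  set P : ℝ := |(p : ℝ)| + |(q : ℝ)| + |(r : ℝ)| + |(s : ℝ)| + 1 with hP
  have hp : |(p : ℝ)| ≤ P := by
    rw [hP]
    linarith [abs_nonneg (q : ℝ), abs_nonneg (r : ℝ), abs_nonneg (s : ℝ)]
  have hq : |(q : ℝ)| ≤ P := by
    rw [hP]
    linarith [abs_nonneg (p : ℝ), abs_nonneg (r : ℝ), abs_nonneg (s : ℝ)]
  have hr : |(r : ℝ)| ≤ P := by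
    rw [hP]
    linarith [abs_nonneg (p : ℝ), abs_nonneg (q : ℝ), abs_nonneg (s : ℝ)]
  have hs : |(s : ℝ)| ≤ P := by
    rw [hP]
    linarith [abs_nonneg (p : ℝ), abs_nonneg (q : ℝ), abs_nonneg (r : ℝ)]
  have hP0 : 0 ≤ P := (abs_nonneg _).trans hp
  set S : ℝ := |t / x 1| with hS
  have hS0 : 0 ≤ S := abs_nonneg _
  set A : ℝ := (S + 2) * (1 + |ξ|) with hA
  have hA0 : 0 ≤ A := by positivity
  have hξ0 := abs_nonneg ξ
  refine ⟨max (max (2 * P * |x 1|) (2 * P * A)) 1, le_max_right _ _, ?_⟩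
  intro c d hc hcop hε1
  set ε := |(c : ℝ) * ξ + d| with hε
  have hε0 : 0 < ε := hξ.abs_int_mul_add_pos hc d
  have hc1 : (1 : ℝ) ≤ |(c : ℝ)| := by exact_mod_cast Int.one_le_abs hc
  have hne : (c : ℝ) * ξ + d ≠ 0 := abs_pos.mp hε0
  obtain ⟨u, v, huv⟩ := hcop
  set k : ℤ := round ((t / x 1 - (v * ξ - u)) / (c * ξ + d)) with hk
  set a' : ℤ := v + k * c with ha'
  set b' : ℤ := -u + k * d with hb'
  have hdet' : (a' * d - b' * c : ℝ) = 1 := by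
    have : (u * c + v * d : ℝ) = 1 := by exact_mod_cast huv
    rw [ha', hb']; push_cast; linear_combination this
  have htop : |(a' : ℝ) * ξ + b' - t / x 1| ≤ ε := by
    have h1 : (a' : ℝ) * ξ + b' - t / x 1 =
        -((c * ξ + d) * ((t / x 1 - (v * ξ - u)) / (c * ξ + d) - k)) := by
      rw [mul_sub, mul_div_cancel₀ _ hne, ha', hb']; push_cast; ring
    rw [h1, abs_neg, abs_mul]
    have := abs_sub_round ((t / x 1 - (v * ξ - u)) / (c * ξ + d))
    rw [← hk] at this
    nlinarith
  have htop' : |(a' : ℝ) * ξ + b'| ≤ S + 1 := by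
    have := abs_sub_abs_le_abs_sub ((a' : ℝ) * ξ + b') (t / x 1)
    linarith
  set Q : ℝ := |(c : ℝ)| / ε with hQ
  have hcQ : |(c : ℝ)| ≤ Q := le_div_self (abs_nonneg _) hε0 hε1
  have hQ1 : 1 ≤ Q := hc1.trans hcQ
  have ha'' : |(a' : ℝ)| ≤ (S + 2) * Q := by
    have h1 : (a' : ℝ) * (c * ξ + d) = 1 + c * (a' * ξ + b') := by linear_combination hdet'
    have h2 : |(a' : ℝ)| * ε ≤ (S + 2) * |(c : ℝ)| := by
      rw [hε, ← abs_mul, h1]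
      refine (abs_add_le _ _).trans ?_
      rw [abs_mul, abs_one]
      nlinarith [mul_le_mul_of_nonneg_left htop' (abs_nonneg (c : ℝ))]
    rw [hQ, mul_div_assoc', le_div_iff₀ hε0]
    exact h2
  have hac : |(a' : ℝ)| ≤ A * Q := ha''.trans (by rw [hA]; gcongr; nlinarith)
  have hbc : |(b' : ℝ)| ≤ A * Q := by
    have h1 : (b' : ℝ) = (a' * ξ + b') - a' * ξ := by ring
    rw [h1]
    refine (abs_sub _ _).trans ?_
    rw [abs_mul, hA]
    nlinarith [mul_le_mul_of_nonneg_right ha'' hξ0, mul_le_mul_of_nonneg_left hQ1 hS0]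
  have hQ0 : 0 ≤ Q := zero_le_one.trans hQ1
  have hQA : Q + Q * |ξ| ≤ A * Q := by
    have : (1 + |ξ|) * Q ≤ A * Q := by
      rw [hA]
      gcongr
      exact le_mul_of_one_le_left (by positivity) (by linarith)
    linarith
  have hQξ : 0 ≤ Q * |ξ| := by positivity
  have hcc : |(c : ℝ)| ≤ A * Q := by linarith
  have hdc : |(d : ℝ)| ≤ A * Q := by
    have h1 : (d : ℝ) = (c * ξ + d) - c * ξ := by ring
    rw [h1]
    refine (abs_sub _ _).trans ?_
    rw [abs_mul]
    have := mul_le_mul_of_nonneg_right hcQ hξ0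
    linarith
  have hcomb : ∀ {m n : ℤ} {z w B : ℝ}, |(m : ℝ)| ≤ P → |(n : ℝ)| ≤ P → |z| ≤ B → |w| ≤ B →
      |m * z + n * w| ≤ 2 * P * B := by
    intro m n z w B hm hn hz hw
    refine (abs_add_le _ _).trans ?_
    rw [abs_mul, abs_mul]
    calc _ ≤ P * B + P * B := by gcongr
      _ = _ := by ring
  have hdetR : (p * s - q * r : ℝ) = 1 := by exact_mod_cast hdet
  refine ⟨!![p * a' + r * c, p * b' + r * d; q * a' + s * c, q * b' + s * d], ?_, ?_, ?_⟩
  · have h : (a' * d - b' * c : ℤ) = 1 := by exact_mod_cast hdet'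
    rw [Matrix.det_fin_two_of]
    linear_combination (p * s - q * r) * h + hdet
  · have h0 : |x 1 * (a' * ξ + b' - t / x 1)| ≤ |x 1| * ε := by rw [abs_mul]; gcongr
    have h1 : |x 1 * (c * ξ + d)| ≤ |x 1| * ε := by rw [abs_mul]
    refine le_trans (b := 2 * P * (|x 1| * ε)) ?_ ?_
    · refine max_le ?_ ?_
      · rw [Pi.sub_apply, act_zero, hy0]
        refine (congrArg abs ?_).trans_le (hcomb hp hr h0 h1)
        simp only [Matrix.of_apply, Matrix.cons_val', Matrix.cons_val_zero, Matrix.cons_val_one,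
          Matrix.cons_val_fin_one]
        push_cast
        rw [hx0]
        field_simp
        ring
      · rw [Pi.sub_apply, act_one, hy1]
        refine (congrArg abs ?_).trans_le (hcomb hq hs h0 h1)
        simp only [Matrix.of_apply, Matrix.cons_val', Matrix.cons_val_zero, Matrix.cons_val_one,
          Matrix.cons_val_fin_one]
        push_cast
        rw [hx0]
        field_simp
        ring
    · rw [← mul_assoc]
      gcongr
      exact (le_max_left _ _).trans (le_max_left _ _)
  · refine le_trans (b := 2 * P * (A * Q)) ?_ ?_
    · unfold mnorm
      simp only [Matrix.of_apply, Matrix.cons_val', Matrix.cons_val_zero, Matrix.cons_val_one,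
        Matrix.cons_val_fin_one]
      push_cast
      exact max_le (max_le (hcomb hp hr hac hcc) (hcomb hp hr hbc hdc))
        (max_le (hcomb hq hs hac hcc) (hcomb hq hs hbc hdc))
    · rw [← mul_assoc]
      gcongr
      exact (le_max_right _ _).trans (le_max_left _ _)

lemma eventually_mul_rpow_neg_lt (C : ℝ) {K θ : ℝ} (hK : 0 < K) (hθ : 0 < θ) :
    ∀ᶠ N : ℝ in Filter.atTop, C * N ^ (-θ) < K := by
  have h := (tendsto_rpow_neg_atTop hθ).const_mul C
  rw [mul_zero] at h
  exact h.eventually_lt_const hK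

lemma le_div_add_one_of_mem_muSet {x y : Fin 2 → ℝ} (hx2 : x 1 ≠ 0)
    (hξ : Irrational (x 0 / x 1)) {W : ℝ} (hW : 0 < W) (hWmem : W ∉ omegaSet (x 0 / x 1))
    (hy : y ≠ 0) (hslope : y 1 = 0 ∨ ∃ r : ℚ, y 0 = (r : ℝ) * y 1)
    {μ : ℝ} (hμ : μ ∈ muSet x y) : μ ≤ W / (W + 1) := by
  by_contra! hlt
  have hμ0 : 0 < μ := lt_trans (by positivity) hlt
  rw [div_lt_iff₀ (by linarith)] at hlt
  obtain ⟨C, hC, δ, hδ, hform⟩ := exists_form_of_approx hx2 hξ hW.le hWmem hy hslope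
  obtain ⟨K, hK, hlow⟩ := exists_pos_le_abs_of_notMem_omegaSet hξ hWmem
  have hθ : 0 < μ * (W + 1) - W := by linarith
  have hC0 : 0 < C := by linarith
  obtain ⟨R, hR⟩ := Filter.eventually_atTop.mp
    (((eventually_mul_rpow_neg_lt 1 hδ hμ0).and
      (eventually_mul_rpow_neg_lt (C * (C ^ 2) ^ W) hK hθ)).and (Filter.eventually_gt_atTop 0))
  obtain ⟨γ, ⟨hdet, herr⟩, hγR⟩ := exists_lt_mnorm_of_infinite hμ R
  obtain ⟨⟨h1, h2⟩, hN⟩ := hR _ hγR.le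
  obtain ⟨c, d, hc, hε, hcε⟩ := hform γ hdet (herr.trans (by linarith))
  set N := mnorm γ
  set ε := |(c : ℝ) * (x 0 / x 1) + d|
  have hcpos : 0 < |(c : ℝ)| := by positivity
  have h3 : ε ≤ C * N ^ (-μ) := hε.trans (by gcongr)
  have h4 : |(c : ℝ)| ≤ C ^ 2 * N ^ (1 - μ) := by
    calc |(c : ℝ)| ≤ C * N * (C * N ^ (-μ)) := hcε.trans (by gcongr)
      _ = C ^ 2 * (N ^ (1 : ℝ) * N ^ (-μ)) := by rw [Real.rpow_one]; ring
      _ = C ^ 2 * N ^ (1 - μ) := by rw [← Real.rpow_add hN]; ring_nf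
  have h5 : K ≤ ε * |(c : ℝ)| ^ W := by
    have := hlow c d hc
    rwa [Real.rpow_neg hcpos.le, ← div_eq_mul_inv, div_le_iff₀ (by positivity)] at this
  have h6 : ε * |(c : ℝ)| ^ W ≤ C * (C ^ 2) ^ W * N ^ (-(μ * (W + 1) - W)) := by
    calc ε * |(c : ℝ)| ^ W ≤ C * N ^ (-μ) * (C ^ 2 * N ^ (1 - μ)) ^ W := by gcongr
      _ = C * (C ^ 2) ^ W * (N ^ (-μ) * N ^ ((1 - μ) * W)) := by
        rw [Real.mul_rpow (by positivity) (by positivity), ← Real.rpow_mul hN.le]; ring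
      _ = C * (C ^ 2) ^ W * N ^ (-(μ * (W + 1) - W)) := by
        rw [← Real.rpow_add hN]; ring_nf
  linarith

lemma mem_muSet_of_lt_div_add_one {x y : Fin 2 → ℝ} (hx2 : x 1 ≠ 0)
    (hξ : Irrational (x 0 / x 1)) {W : ℝ} (hW : 0 ≤ W) (hWmem : W ∉ omegaSet (x 0 / x 1))
    (hy : y ≠ 0) (hslope : y 1 = 0 ∨ ∃ r : ℚ, y 0 = (r : ℝ) * y 1)
    {w μ : ℝ} (hw : 0 < w) (hwmem : w ∈ omegaSet (x 0 / x 1)) (hμ : μ < w / (w + 1)) :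
    μ ∈ muSet x y := by
  obtain ⟨C, hC, δ, hδ, hform⟩ := exists_form_of_approx hx2 hξ hW hWmem hy hslope
  obtain ⟨B, hB, happ⟩ := exists_approx_of_form hx2 hξ hy hslope
  have hC0 : 0 < C := by linarith
  have hB0 : 0 < B := by linarith
  refine infinite_of_forall_exists_lt_mnorm fun R => ?_
  set ν := w / (w + 1) with hν
  have hν0 : 0 < ν := by positivity
  have hν1 : ν * (1 + 1 / w) = 1 := by rw [hν]; field_simp
  obtain ⟨R', hR'⟩ := Filter.eventually_atTop.mp
    (((eventually_mul_rpow_neg_lt (B * B ^ ν) one_pos (sub_pos.mpr hμ)).and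
      (Filter.eventually_gt_atTop R)).and (Filter.eventually_gt_atTop 0))
  set R₁ := max R' 1 with hR₁
  have hR₁0 : 0 < R₁ := lt_of_lt_of_le one_pos (le_max_right _ _)
  -- forcing the linear form below `τ` forces `mnorm γ` above `R₁`
  set τ := min (min (δ / B) (1 / (B * C ^ 2 * R₁))) (1 / 2) with hτ
  have hτ0 : 0 < τ := by positivity
  obtain ⟨V, hV⟩ := Filter.eventually_atTop.mp (eventually_mul_rpow_neg_lt 1 hτ0 hw)
  obtain ⟨v, u, hvV, hvu⟩ := exists_lt_abs_of_mem_omegaSet hwmem (max V 1)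
  have hv1 : 1 < |(v : ℝ)| := (le_max_right _ _).trans_lt hvV
  have hvτ : |(v : ℝ)| ^ (-w) < τ := by
    simpa using hV _ ((le_max_left _ _).trans hvV.le)
  have hv0 : v ≠ 0 := by rintro rfl; simp at hv1; linarith
  obtain ⟨c, d, g, hcop, hg, hvc, hud⟩ : ∃ c d g : ℤ,
      IsCoprime c d ∧ 1 ≤ g ∧ v = g * c ∧ u = g * d := by
    have hpos : 0 < Int.gcd v u := Int.gcd_pos_of_ne_zero_left _ hv0
    obtain ⟨c, d, hcd, h1, h2⟩ := Int.exists_gcd_one hpos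
    exact ⟨c, d, Int.gcd v u, Int.isCoprime_iff_gcd_eq_one.mpr hcd, by exact_mod_cast hpos,
      by rw [mul_comm]; exact h1, by rw [mul_comm]; exact h2⟩
  have hc : c ≠ 0 := by rintro rfl; simp at hvc; exact hv0 hvc
  have hg1 : (1 : ℝ) ≤ g := by exact_mod_cast hg
  have hεpos := hξ.abs_int_mul_add_pos hc d
  set ξ := x 0 / x 1
  set ε := |(c : ℝ) * ξ + d| with hε
  have hεv : ε ≤ |(v : ℝ)| ^ (-w) := by
    refine le_trans ?_ hvu
    rw [hvc, hud]
    push_cast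
    rw [show (g : ℝ) * c * ξ + g * d = g * (c * ξ + d) by ring, abs_mul,
      abs_of_nonneg (by linarith : (0 : ℝ) ≤ g)]
    exact le_mul_of_one_le_left (abs_nonneg _) hg1
  have hcpos : 0 < |(c : ℝ)| := by positivity
  have hcv : |(c : ℝ)| ≤ |(v : ℝ)| := by
    rw [hvc]
    push_cast
    rw [abs_mul, abs_of_nonneg (by linarith : (0 : ℝ) ≤ g)]
    exact le_mul_of_one_le_left (abs_nonneg _) hg1
  have hετ : ε < τ := hεv.trans_lt hvτ
  have hε1 : ε ≤ 1 := by
    have : τ ≤ 1 / 2 := min_le_right _ _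
    linarith
  have hcε : |(c : ℝ)| ≤ ε ^ (-(1 / w)) := by
    have h1 : ε ≤ |(c : ℝ)| ^ (-w) :=
      hεv.trans (Real.rpow_le_rpow_of_nonpos hcpos hcv (by linarith))
    have h2 : (|(c : ℝ)| ^ (-w)) ^ (-(1 / w)) ≤ ε ^ (-(1 / w)) :=
      Real.rpow_le_rpow_of_nonpos hεpos h1 (by simp; exact hw.le)
    rwa [← Real.rpow_mul hcpos.le, show -w * -(1 / w) = 1 by field_simp, Real.rpow_one] at h2
  obtain ⟨γ, hdet, herr, hN⟩ := happ c d hc hcop hε1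
  have herrδ : vnorm (act γ x - y) ≤ δ := by
    have h1 : ε < δ / B := hετ.trans_le ((min_le_left _ _).trans (min_le_left _ _))
    rw [lt_div_iff₀ hB0] at h1
    linarith
  obtain ⟨c', d', hc', hε', hcN⟩ := hform γ hdet herrδ
  have hNpos := mnorm_nonneg γ
  have hNR : R₁ < mnorm γ := by
    have h1 : (1 : ℝ) ≤ |(c' : ℝ)| := by exact_mod_cast Int.one_le_abs hc'
    have h2 : 1 ≤ B * C ^ 2 * mnorm γ * ε := by
      calc 1 ≤ C * mnorm γ * (C * (B * ε)) := h1.trans (hcN.trans (by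
            gcongr
            exact hε'.trans (by gcongr)))
        _ = _ := by ring
    have h3 : ε < 1 / (B * C ^ 2 * R₁) :=
      hετ.trans_le ((min_le_left _ _).trans (min_le_right _ _))
    rw [lt_div_iff₀ (by positivity)] at h3
    by_contra! h4
    have : B * C ^ 2 * mnorm γ * ε ≤ ε * (B * C ^ 2 * R₁) := by
      calc _ ≤ B * C ^ 2 * R₁ * ε := by gcongr
        _ = _ := by ring
    linarith
  obtain ⟨⟨h1, h2⟩, h0⟩ := hR' _ ((le_max_left _ _).trans hNR.le)
  refine ⟨γ, ⟨hdet, ?_⟩, h2⟩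
  set N := mnorm γ
  have hNε : N ≤ B * ε ^ (-(1 + 1 / w)) := by
    refine hN.trans ?_
    gcongr
    rw [div_eq_mul_inv, ← Real.rpow_neg_one]
    calc _ ≤ ε ^ (-(1 / w)) * ε ^ (-1 : ℝ) := by gcongr
      _ = _ := by rw [← Real.rpow_add hεpos]; ring_nf
  have hεN : ε ≤ B ^ ν * N ^ (-ν) := by
    have h3 : N ^ ν ≤ (B * ε ^ (-(1 + 1 / w))) ^ ν := by gcongr
    rw [Real.mul_rpow hB0.le (by positivity), ← Real.rpow_mul hεpos.le,
      show -(1 + 1 / w) * ν = -1 by linarith, Real.rpow_neg_one, ← div_eq_mul_inv,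
      le_div_iff₀ hεpos] at h3
    rw [Real.rpow_neg hNpos, ← div_eq_mul_inv, le_div_iff₀ (by positivity)]
    linarith
  calc vnorm (act γ x - y) ≤ B * (B ^ ν * N ^ (-ν)) := herr.trans (by gcongr)
    _ = B * B ^ ν * N ^ (-(ν - μ)) * N ^ (-μ) := by
      rw [mul_assoc, mul_assoc, ← Real.rpow_add h0]; ring_nf
    _ ≤ 1 * N ^ (-μ) := by gcongr
    _ = N ^ (-μ) := one_mul _

lemma le_one_div_add_one_of_mem_muHatSet {x y : Fin 2 → ℝ} (hx2 : x 1 ≠ 0)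
    (hξ : Irrational (x 0 / x 1)) {W : ℝ} (hW : 0 ≤ W) (hWmem : W ∉ omegaSet (x 0 / x 1))
    (hy : y ≠ 0) (hslope : y 1 = 0 ∨ ∃ r : ℚ, y 0 = (r : ℝ) * y 1)
    {w μ : ℝ} (hw : 0 < w) (hwmem : w ∈ omegaSet (x 0 / x 1)) (hμ : μ ∈ muHatSet x y) :
    μ ≤ 1 / (w + 1) := by
  by_contra! hlt
  have hμ0 : 0 < μ := lt_trans (by positivity) hlt
  rw [div_lt_iff₀ (by linarith)] at hlt
  obtain ⟨C, hC, δ, hδ, hform⟩ := exists_form_of_approx hx2 hξ hW hWmem hy hslope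
  have hC0 : 0 < C := by linarith
  obtain ⟨T₀, hT₀⟩ := hμ
  obtain ⟨T₁, hT₁⟩ := Filter.eventually_atTop.mp (eventually_mul_rpow_neg_lt 1 hδ hμ0)
  set κ := 1 / (2 * C) with hκ
  have hκ0 : 0 < κ := by positivity
  have hκC : κ * C = 1 / 2 := by rw [hκ]; field_simp
  obtain ⟨V, hV⟩ := Filter.eventually_atTop.mp
    ((eventually_mul_rpow_neg_lt (2 * C * κ ^ (-μ)) one_pos (sub_pos.mpr hlt)).and
      (Filter.eventually_ge_atTop (max (max T₀ T₁) 1 / κ)))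
  obtain ⟨v, u, hvV, hvu⟩ := exists_lt_abs_of_mem_omegaSet hwmem (max V 1)
  obtain ⟨h1, h2⟩ := hV _ ((le_max_left _ _).trans hvV.le)
  have hv1 : 1 < |(v : ℝ)| := (le_max_right _ _).trans_lt hvV
  have hv0 : v ≠ 0 := by rintro rfl; simp at hv1; linarith
  have hvpos : 0 < |(v : ℝ)| := by linarith
  have hεpos := hξ.abs_int_mul_add_pos hv0 u
  set ξ := x 0 / x 1
  set ε := |(v : ℝ) * ξ + u| with hε
  set T := κ * |(v : ℝ)| / ε with hT
  have hTε : T * ε = κ * |(v : ℝ)| := by rw [hT]; field_simp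
  have hTv : κ * |(v : ℝ)| ^ (1 + w) ≤ T := by
    rw [hT, le_div_iff₀ hεpos]
    calc _ ≤ κ * |(v : ℝ)| ^ (1 + w) * |(v : ℝ)| ^ (-w) := by gcongr
      _ = κ * |(v : ℝ)| := by
        rw [mul_assoc, ← Real.rpow_add hvpos, show 1 + w + -w = 1 by ring, Real.rpow_one]
  have hvT : max (max T₀ T₁) 1 ≤ T := by
    rw [div_le_iff₀ hκ0] at h2
    refine (h2.trans ?_).trans hTv
    rw [mul_comm]
    gcongr
    exact Real.self_le_rpow_of_one_le hv1.le (by linarith)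
  have hT1 : 1 ≤ T := (le_max_right _ _).trans hvT
  have hTpos : 0 < T := by linarith
  obtain ⟨γ, hdet, hN, herr⟩ := hT₀ T (((le_max_left _ _).trans (le_max_left _ _)).trans hvT)
  have h3 := hT₁ T (((le_max_right _ _).trans (le_max_left _ _)).trans hvT)
  obtain ⟨c, d, hc, hεc, hcε⟩ := hform γ hdet (herr.trans (by linarith))
  have hε'pos := hξ.abs_int_mul_add_pos hc d
  set ε' := |(c : ℝ) * ξ + d| with hε'
  have hcT : |(c : ℝ)| ≤ C * T * ε' := hcε.trans (by gcongr)
  have hcv : |(c : ℝ)| * ε ≤ 1 / 2 * |(v : ℝ)| * ε' := by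
    calc |(c : ℝ)| * ε ≤ C * T * ε' * ε := by gcongr
      _ = C * (T * ε) * ε' := by ring
      _ = 1 / 2 * |(v : ℝ)| * ε' := by rw [hTε, ← hκC]; ring
  have hid : (c : ℝ) * (v * ξ + u) - v * (c * ξ + d) = ((c * u - v * d : ℤ) : ℝ) := by
    push_cast; ring
  have hD : c * u - v * d ≠ 0 := by
    intro h0
    rw [h0, Int.cast_zero, sub_eq_zero] at hid
    have h4 : |(c : ℝ)| * ε = |(v : ℝ)| * ε' := by
      rw [hε, hε', ← abs_mul, ← abs_mul, hid]
    have : 0 < |(v : ℝ)| * ε' := by positivity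
    linarith
  have h4 : 1 ≤ 2 * |(v : ℝ)| * ε' := by
    have h5 : (1 : ℝ) ≤ |((c * u - v * d : ℤ) : ℝ)| := by exact_mod_cast Int.one_le_abs hD
    rw [← hid] at h5
    have h6 := abs_sub ((c : ℝ) * (v * ξ + u)) (v * (c * ξ + d))
    rw [abs_mul, abs_mul, ← hε, ← hε'] at h6
    have : 0 < |(v : ℝ)| * ε' := by positivity
    linarith
  have h5 : ε' ≤ C * (κ ^ (-μ) * |(v : ℝ)| ^ (-(μ * (w + 1)))) := by
    refine (hεc.trans (mul_le_mul_of_nonneg_left herr hC0.le)).trans ?_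
    gcongr
    calc T ^ (-μ) ≤ (κ * |(v : ℝ)| ^ (1 + w)) ^ (-μ) :=
          Real.rpow_le_rpow_of_nonpos (by positivity) hTv (by linarith)
      _ = _ := by
        rw [Real.mul_rpow hκ0.le (by positivity), ← Real.rpow_mul hvpos.le]; ring_nf
  have h6 : 2 * |(v : ℝ)| * ε' ≤ 2 * C * κ ^ (-μ) * |(v : ℝ)| ^ (-(μ * (w + 1) - 1)) := by
    calc _ ≤ 2 * |(v : ℝ)| * (C * (κ ^ (-μ) * |(v : ℝ)| ^ (-(μ * (w + 1))))) := by gcongr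
      _ = 2 * C * κ ^ (-μ) * (|(v : ℝ)| ^ (1 : ℝ) * |(v : ℝ)| ^ (-(μ * (w + 1)))) := by
        rw [Real.rpow_one]; ring
      _ = _ := by rw [← Real.rpow_add hvpos]; ring_nf
  linarith

lemma mem_muHatSet_of_lt_one_div_add_one {x y : Fin 2 → ℝ} (hx2 : x 1 ≠ 0)
    (hξ : Irrational (x 0 / x 1)) {W : ℝ} (hW : 0 < W) (hWmem : W ∉ omegaSet (x 0 / x 1))
    (hy : y ≠ 0) (hslope : y 1 = 0 ∨ ∃ r : ℚ, y 0 = (r : ℝ) * y 1)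
    {μ : ℝ} (hμ : μ < 1 / (W + 1)) : μ ∈ muHatSet x y := by
  obtain ⟨C, hC, happ⟩ := exists_approx_of_form hx2 hξ hy hslope
  obtain ⟨K, hK, hlow⟩ := exists_pos_le_abs_of_notMem_omegaSet hξ hWmem
  have hC0 : 0 < C := by linarith
  set β := 1 / (W + 1) with hβ
  have hβ0 : 0 < β := by positivity
  have hβ1 : β * (W + 1) = 1 := by rw [hβ]; field_simp
  set κ := K / C with hκ
  have hκ0 : 0 < κ := by positivity
  obtain ⟨T₀, hT₀⟩ := Filter.eventually_atTop.mp
    ((eventually_mul_rpow_neg_lt (C * κ ^ (-β)) one_pos (sub_pos.mpr hμ)).and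
      (Filter.eventually_ge_atTop (max (1 / κ) 1)))
  refine ⟨T₀, fun T hT => ?_⟩
  obtain ⟨h1, h2⟩ := hT₀ T hT
  have hTpos : 0 < T := lt_of_lt_of_le one_pos ((le_max_right _ _).trans h2)
  have hκT : 1 ≤ κ * T := by
    have := (le_max_left _ _).trans h2
    rw [div_le_iff₀ hκ0] at this
    linarith
  set Y := (κ * T) ^ β with hY
  have hY1 : 1 ≤ Y := Real.one_le_rpow hκT hβ0.le
  set n := ⌊Y⌋₊ with hn
  have hn0 : 0 < n := Nat.floor_pos.mpr hY1
  have hnY : (n : ℝ) ≤ Y := Nat.floor_le (by linarith)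
  have hYn : Y < n + 1 := Nat.lt_floor_add_one Y
  obtain ⟨q, hq, hqn⟩ := Real.exists_rat_abs_sub_le_and_den_le (x 0 / x 1) hn0
  set ξ := x 0 / x 1
  have hqpos : (0 : ℝ) < q.den := by exact_mod_cast q.pos
  have hc : (q.den : ℤ) ≠ 0 := by exact_mod_cast q.den_nz
  have hcop : IsCoprime (q.den : ℤ) (-q.num) := by
    rw [IsCoprime.neg_right_iff, isCoprime_comm]
    exact Int.isCoprime_iff_gcd_eq_one.mpr (show Int.gcd q.num q.den = 1 from q.reduced)
  have hεpos := hξ.abs_int_mul_add_pos hc (-q.num)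
  have hlow' := hlow q.den (-q.num) hc
  have hY0 : 0 < Y := by linarith
  have hεY : |((q.den : ℤ) : ℝ) * ξ + ((-q.num : ℤ) : ℝ)| ≤ Y⁻¹ := by
    have e : ((q.den : ℤ) : ℝ) * ξ + ((-q.num : ℤ) : ℝ) = q.den * (ξ - q) := by
      rw [Rat.cast_def (K := ℝ) q]; push_cast; field_simp; ring
    rw [e, abs_mul, abs_of_pos hqpos]
    calc (q.den : ℝ) * |ξ - q| ≤ q.den * (1 / ((n + 1) * q.den)) := by gcongr
      _ = ((n : ℝ) + 1)⁻¹ := by field_simp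
      _ ≤ Y⁻¹ := by gcongr
  obtain ⟨γ, hdet, herr, hN⟩ := happ q.den (-q.num) hc hcop (hεY.trans (inv_le_one_of_one_le₀ hY1))
  set ε := |((q.den : ℤ) : ℝ) * ξ + ((-q.num : ℤ) : ℝ)|
  rw [Int.cast_natCast, abs_of_pos hqpos] at hN hlow'
  refine ⟨γ, hdet, hN.trans ?_, herr.trans ?_⟩
  · have h3 : (q.den : ℝ) / ε ≤ T / C := by
      rw [div_le_iff₀ hεpos]
      have h4 : (q.den : ℝ) ^ (W + 1) ≤ κ * T := by
        calc (q.den : ℝ) ^ (W + 1) ≤ Y ^ (W + 1) := by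
              gcongr
              exact le_trans (by exact_mod_cast hqn) hnY
          _ = κ * T := by
            rw [hY, ← Real.rpow_mul (by positivity), hβ1, Real.rpow_one]
      calc (q.den : ℝ) = (q.den : ℝ) ^ (W + 1) * (q.den : ℝ) ^ (-W) := by
            rw [← Real.rpow_add hqpos, show W + 1 + -W = 1 by ring, Real.rpow_one]
        _ ≤ κ * T * (q.den : ℝ) ^ (-W) := by gcongr
        _ = T / C * (K * (q.den : ℝ) ^ (-W)) := by rw [hκ]; ring
        _ ≤ T / C * ε := by gcongr
    calc C * ((q.den : ℝ) / ε) ≤ C * (T / C) := by gcongr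
      _ = T := by field_simp
  · calc C * ε ≤ C * Y⁻¹ := by gcongr
      _ = C * κ ^ (-β) * T ^ (-(β - μ)) * T ^ (-μ) := by
        rw [hY, ← Real.rpow_neg (by positivity), Real.mul_rpow hκ0.le hTpos.le, mul_assoc,
          mul_assoc, ← Real.rpow_add hTpos]
        ring_nf
      _ ≤ 1 * T ^ (-μ) := by gcongr
      _ = T ^ (-μ) := one_mul _

/-- for `x` with irrational slope `ξ`, `ω(ξ) < ∞`, and `y ≠ 0` of rational
slope (or `y₂ = 0`): `μ(x, y) = ω(ξ)/(ω(ξ)+1)` and `μ̂(x, y) = 1/(ω(ξ)+1)`. -/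
theorem stmt9 (x y : Fin 2 → ℝ) (hx2 : x 1 ≠ 0) (hξ : Irrational (x 0 / x 1))
    (w : ℝ) (hw : IsLUB (omegaSet (x 0 / x 1)) w)
    (hy : y ≠ 0) (hslope : y 1 = 0 ∨ ∃ r : ℚ, y 0 = (r : ℝ) * y 1) :
    IsLUB (muSet x y) (w / (w + 1)) ∧ IsLUB (muHatSet x y) (1 / (w + 1)) := by
  have hw1 : 1 ≤ w := hw.1 (one_mem_omegaSet hξ)
  have hnot : ∀ {W : ℝ}, w < W → W ∉ omegaSet (x 0 / x 1) := fun hW h => (hw.1 h).not_gt hW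
  have hne : w + 1 ≠ 0 := by linarith
  have hf : ContinuousAt (fun z : ℝ => z / (z + 1)) w := by fun_prop (disch := exact hne)
  have hg : ContinuousAt (fun z : ℝ => 1 / (z + 1)) w := by fun_prop (disch := exact hne)
  have hw' : w < w + 1 := by linarith
  refine ⟨⟨fun μ hμ => ?_, fun b hb => le_of_forall_lt fun μ hμ => ?_⟩,
    ⟨fun μ hμ => ?_, fun b hb => le_of_forall_lt fun μ hμ => ?_⟩⟩
  · refine ge_of_tendsto (hf.tendsto.mono_left (nhdsWithin_le_nhds (s := Set.Ioi w))) ?_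
    filter_upwards [self_mem_nhdsWithin] with W hW
    have hW' : w < W := hW
    exact le_div_add_one_of_mem_muSet hx2 hξ (by linarith) (hnot hW) hy hslope hμ
  · obtain ⟨ν, hμν, hν⟩ := exists_between hμ
    obtain ⟨l, hl, hlw⟩ := exists_Ioc_subset_of_mem_nhds
      (hf.eventually_const_lt hν) ⟨w - 1, by linarith⟩
    obtain ⟨v, hv, hlv, hvw⟩ := hw.exists_between (max_lt hl (by linarith : (0 : ℝ) < w))
    refine hμν.trans_le (hb ?_)
    exact mem_muSet_of_lt_div_add_one hx2 hξ (by linarith) (hnot hw') hy hslope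
      ((le_max_right _ _).trans_lt hlv) hv (hlw ⟨(le_max_left _ _).trans_lt hlv, hvw⟩)
  · by_contra! hlt
    obtain ⟨l, hl, hlw⟩ := exists_Ioc_subset_of_mem_nhds
      (hg.eventually_lt_const hlt) ⟨w - 1, by linarith⟩
    obtain ⟨v, hv, hlv, hvw⟩ := hw.exists_between (max_lt hl (by linarith : (0 : ℝ) < w))
    have h1 : 1 / (v + 1) < μ := hlw ⟨(le_max_left _ _).trans_lt hlv, hvw⟩
    exact h1.not_ge (le_one_div_add_one_of_mem_muHatSet hx2 hξ (by linarith) (hnot hw') hy hslope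
      ((le_max_right _ _).trans_lt hlv) hv hμ)
  · obtain ⟨ν, hμν, hν⟩ := exists_between hμ
    have hev : ∀ᶠ z in nhdsWithin w (Set.Ioi w), ν < 1 / (z + 1) :=
      (hg.tendsto.mono_left nhdsWithin_le_nhds).eventually_const_lt hν
    obtain ⟨W, hW, hwW⟩ := (hev.and self_mem_nhdsWithin).exists
    have hwW' : w < W := hwW
    exact hμν.trans_le (hb (mem_muHatSet_of_lt_one_div_add_one hx2 hξ (by linarith) (hnot hwW) hy
      hslope hW))
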